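/- arXiv:1704.07564 — 2 statements merged into one kernel-verified Lean document; each statement's English description precedes it below -/
import Mathlib

section
/- For any QCQ channel F(ρ) = Σ_k ρ_k Tr(M_k ρ) on a d-dimensional Hilbert space, the average fidelity ∫ ⟨ψ|F(|ψ⟩⟨ψ|)|ψ⟩ dψ over the uniform measure on pure states is at most 2/(d+1), and this bound is attained (e.g., by projective measurement in an orthonormal basis followed by repreparation of the corresponding basis state). -/
open MeasureTheory Matrix ComplexOrder

/-- A QCQ (measure-and-prepare, entanglement-breaking) channel. -/
def IsQCQ {d : ℕ}
    (Φ : Matrix (Fin d) (Fin d) ℂ →ₗ[ℂ] Matrix (Fin d) (Fin d) ℂ) : Prop :=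
  ∃ (m : ℕ) (ρs Ms : Fin m → Matrix (Fin d) (Fin d) ℂ),
    (∀ k, (ρs k).PosSemidef ∧ (ρs k).trace = 1) ∧
    (∀ k, (Ms k).PosSemidef) ∧ (∑ k, Ms k = 1) ∧
    (∀ X, Φ X = ∑ k, (Ms k * X).trace • ρs k)

/-!
Unitary invariance forces the fourth moment `∫ ‖⟪v, ψ⟫‖ ^ 4` to be proportional to `‖v‖ ^ 4`.
Polarizing this and fixing the constant by `∑ i, ‖⟪b i, ψ⟫‖ ^ 2 = 1` gives
`∫ ⟨ψ|A|ψ⟩ ⟨ψ|B|ψ⟩ = (tr A * tr B + tr (A * B)) / (d * (d + 1))`, so that the average fidelity of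
*every* linear map `F` on matrices is `(tr (F 1) + Tr F) / (d * (d + 1))`, with `Tr` the
Hilbert–Schmidt trace. A QCQ channel preserves the trace, so `tr (F 1) = d`, and its
Hilbert–Schmidt trace `∑ k, tr (M k * ρ k)` is at most `∑ k, tr (M k) * tr (ρ k) = d`.
-/

open Module (finrank)
open scoped InnerProductSpace

theorem exists_linearIsometryEquiv_apply_eq_of_norm_eq_one {𝕜 E : Type*} [RCLike 𝕜]
    [NormedAddCommGroup E] [InnerProductSpace 𝕜 E] [FiniteDimensional 𝕜 E] {u v : E}
    (hu : ‖u‖ = 1) (hv : ‖v‖ = 1) : ∃ U : E ≃ₗᵢ[𝕜] E, U u = v := by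
  let toSpan := LinearIsometryEquiv.toSpanUnitSingleton (𝕜 := 𝕜) (E := E)
  let f : 𝕜 ∙ u →ₗᵢ[𝕜] E :=
    (𝕜 ∙ v).subtypeₗᵢ.comp ((toSpan u hu).symm.trans (toSpan v hv)).toLinearIsometry
  have hf : f (toSpan u hu 1) = toSpan v hv 1 :=
    congrArg (fun c => (toSpan v hv c : E)) ((toSpan u hu).symm_apply_apply 1)
  have hext := (f.extend_apply _).trans hf
  exact ⟨f.extend.toLinearIsometryEquiv rfl, by simpa [toSpan] using hext⟩

theorem exists_linearIsometryEquiv_apply_eq_of_norm_eq {𝕜 E : Type*} [RCLike 𝕜]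
    [NormedAddCommGroup E] [InnerProductSpace 𝕜 E] [FiniteDimensional 𝕜 E] {u v : E}
    (h : ‖u‖ = ‖v‖) : ∃ U : E ≃ₗᵢ[𝕜] E, U u = v := by
  rcases eq_or_ne v 0 with rfl | hv
  · exact ⟨.refl 𝕜 E, by simpa using h⟩
  have hu : u ≠ 0 := by rwa [← norm_ne_zero_iff, h, norm_ne_zero_iff]
  obtain ⟨U, hU⟩ := exists_linearIsometryEquiv_apply_eq_of_norm_eq_one (𝕜 := 𝕜)
    (norm_smul_inv_norm (𝕜 := 𝕜) hu) (norm_smul_inv_norm (𝕜 := 𝕜) hv)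
  have hc : (‖v‖ : 𝕜)⁻¹ ≠ 0 := by simpa using hv
  rw [map_smul, h] at hU
  exact ⟨U, smul_right_injective E hc hU⟩

section UniformOnSphere

variable {E : Type*} [NormedAddCommGroup E] [InnerProductSpace ℂ E]

theorem sum_norm_add_I_smul_pow_four (x y : E) :
    ‖x + y‖ ^ 4 + ‖x - y‖ ^ 4 + ‖x + Complex.I • y‖ ^ 4 + ‖x - Complex.I • y‖ ^ 4
      = 4 * (‖x‖ ^ 4 + ‖y‖ ^ 4 + 2 * (‖x‖ ^ 2 * ‖y‖ ^ 2 + ‖⟪x, y⟫_ℂ‖ ^ 2)) := by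
  have hpow (z : E) : ‖z‖ ^ 4 = (‖z‖ ^ 2) ^ 2 := by ring
  have hinner : ‖⟪x, y⟫_ℂ‖ ^ 2 = (⟪x, y⟫_ℂ).re ^ 2 + (⟪x, y⟫_ℂ).im ^ 2 := by
    rw [← Complex.normSq_eq_norm_sq, Complex.normSq_apply]; ring
  simp only [hpow, norm_add_sq (𝕜 := ℂ), norm_sub_sq (𝕜 := ℂ), inner_smul_right, norm_smul,
    Complex.norm_I, RCLike.re_eq_complex_re, Complex.I_mul_re, hinner]
  ring

variable [MeasurableSpace E]

/-- The normalized unitarily invariant measure on the unit sphere of a complex inner product space,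
regarded as a measure on the whole space. -/
structure IsUniformOnSphere (μ : Measure E) : Prop where
  isProbabilityMeasure : IsProbabilityMeasure μ
  ae_norm_eq_one : ∀ᵐ ψ ∂μ, ‖ψ‖ = 1
  measurePreserving (U : E ≃ₗᵢ[ℂ] E) : MeasurePreserving U μ μ

namespace IsUniformOnSphere

variable [FiniteDimensional ℂ E] {μ : Measure E} (hμ : IsUniformOnSphere μ)
include hμ

theorem finrank_pos : 0 < finrank ℂ E := by
  have := hμ.isProbabilityMeasure
  obtain ⟨u, hu⟩ := hμ.ae_norm_eq_one.exists
  have hu0 : u ≠ 0 := norm_ne_zero_iff.mp (hu.symm ▸ one_ne_zero)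
  exact Module.finrank_pos_iff_exists_ne_zero.mpr ⟨u, hu0⟩

variable [BorelSpace E]

theorem integrable_of_continuous {G : Type*} [NormedAddCommGroup G] {f : E → G}
    (hf : Continuous f) : Integrable f μ := by
  have := hμ.isProbabilityMeasure
  have := FiniteDimensional.proper_rclike ℂ E
  have hsphere : ∀ᵐ ψ ∂μ, ψ ∈ Metric.sphere (0 : E) 1 := by
    simpa using hμ.ae_norm_eq_one
  rw [← Measure.restrict_eq_self_of_ae_mem hsphere]
  exact hf.continuousOn.integrableOn_compact (isCompact_sphere 0 1)

theorem integral_norm_inner_pow_four_eq_norm_pow_four_mul {u : E} (hu : ‖u‖ = 1) (v : E) :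
    ∫ ψ, ‖⟪v, ψ⟫_ℂ‖ ^ 4 ∂μ = ‖v‖ ^ 4 * ∫ ψ, ‖⟪u, ψ⟫_ℂ‖ ^ 4 ∂μ := by
  obtain ⟨U, hU⟩ := exists_linearIsometryEquiv_apply_eq_of_norm_eq (𝕜 := ℂ)
    (u := (‖v‖ : ℂ) • u) (v := v) (by simp [norm_smul, hu])
  calc ∫ ψ, ‖⟪v, ψ⟫_ℂ‖ ^ 4 ∂μ = ∫ ψ, ‖⟪v, U ψ⟫_ℂ‖ ^ 4 ∂μ :=
        ((hμ.measurePreserving U).integral_comp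
          U.toHomeomorph.measurableEmbedding (fun ψ => ‖⟪v, ψ⟫_ℂ‖ ^ 4)).symm
    _ = ∫ ψ, ‖v‖ ^ 4 * ‖⟪u, ψ⟫_ℂ‖ ^ 4 ∂μ := by
        congr 1 with ψ
        nth_rw 1 [← hU]
        rw [U.inner_map_map, inner_smul_left, norm_mul, mul_pow]
        simp
    _ = ‖v‖ ^ 4 * ∫ ψ, ‖⟪u, ψ⟫_ℂ‖ ^ 4 ∂μ := integral_const_mul _ _

theorem two_mul_integral_norm_inner_sq_mul_norm_inner_sq {u : E} (hu : ‖u‖ = 1) (v w : E) :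
    2 * ∫ ψ, ‖⟪v, ψ⟫_ℂ‖ ^ 2 * ‖⟪w, ψ⟫_ℂ‖ ^ 2 ∂μ
      = (‖v‖ ^ 2 * ‖w‖ ^ 2 + ‖⟪v, w⟫_ℂ‖ ^ 2) * ∫ ψ, ‖⟪u, ψ⟫_ℂ‖ ^ 4 ∂μ := by
  have hadd {f g : E → ℝ} (hf : Continuous f) (hg : Continuous g) :
      ∫ ψ, f ψ + g ψ ∂μ = ∫ ψ, f ψ ∂μ + ∫ ψ, g ψ ∂μ :=
    integral_add (hμ.integrable_of_continuous hf) (hμ.integrable_of_continuous hg)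
  have hpow := hμ.integral_norm_inner_pow_four_eq_norm_pow_four_mul hu
  generalize ∫ ψ, ‖⟪u, ψ⟫_ℂ‖ ^ 4 ∂μ = α at hpow ⊢
  have hpolar (ψ : E) : ‖⟪v + w, ψ⟫_ℂ‖ ^ 4 + ‖⟪v - w, ψ⟫_ℂ‖ ^ 4
        + ‖⟪v + Complex.I • w, ψ⟫_ℂ‖ ^ 4 + ‖⟪v - Complex.I • w, ψ⟫_ℂ‖ ^ 4
      = 4 * (‖⟪v, ψ⟫_ℂ‖ ^ 4 + ‖⟪w, ψ⟫_ℂ‖ ^ 4 + 4 * (‖⟪v, ψ⟫_ℂ‖ ^ 2 * ‖⟪w, ψ⟫_ℂ‖ ^ 2)) := by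
    have hscalar := sum_norm_add_I_smul_pow_four ⟪ψ, v⟫_ℂ ⟪ψ, w⟫_ℂ
    simp only [← inner_add_right, ← inner_sub_right, ← inner_smul_right_eq_smul,
      RCLike.inner_apply, norm_mul, RCLike.norm_conj] at hscalar
    simp only [norm_inner_symm _ ψ, hscalar]
    ring
  have hintegral := integral_congr_ae (μ := μ) (.of_forall hpolar)
  simp (disch := fun_prop) only [hadd, integral_const_mul, hpow] at hintegral
  linear_combination α * sum_norm_add_I_smul_pow_four v w / 8 - hintegral / 8

theorem sum_sum_integral_norm_inner_sq_mul_norm_inner_sq {ι : Type*} [Fintype ι]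
    (b : OrthonormalBasis ι ℂ E) :
    ∑ i, ∑ j, ∫ ψ, ‖⟪b i, ψ⟫_ℂ‖ ^ 2 * ‖⟪b j, ψ⟫_ℂ‖ ^ 2 ∂μ = 1 := by
  have := hμ.isProbabilityMeasure
  have hint (i j : ι) : Integrable (fun ψ => ‖⟪b i, ψ⟫_ℂ‖ ^ 2 * ‖⟪b j, ψ⟫_ℂ‖ ^ 2) μ :=
    hμ.integrable_of_continuous (by fun_prop)
  calc ∑ i, ∑ j, ∫ ψ, ‖⟪b i, ψ⟫_ℂ‖ ^ 2 * ‖⟪b j, ψ⟫_ℂ‖ ^ 2 ∂μ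
      = ∫ ψ, ∑ i, ∑ j, ‖⟪b i, ψ⟫_ℂ‖ ^ 2 * ‖⟪b j, ψ⟫_ℂ‖ ^ 2 ∂μ := by
        rw [integral_finsetSum _ fun i _ => integrable_finsetSum _ fun j _ => hint i j]
        simp only [integral_finsetSum _ fun j _ => hint _ j]
    _ = ∫ _, 1 ∂μ := by
        refine integral_congr_ae ?_
        filter_upwards [hμ.ae_norm_eq_one] with ψ hψ
        simp only [← Finset.sum_mul_sum, b.sum_sq_norm_inner_right, hψ, one_pow, mul_one]
    _ = 1 := by simp

theorem finrank_mul_add_one_mul_integral_norm_inner_pow_four {u : E} (hu : ‖u‖ = 1) :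
    (finrank ℂ E * (finrank ℂ E + 1)) * ∫ ψ, ‖⟪u, ψ⟫_ℂ‖ ^ 4 ∂μ = 2 := by
  let b := stdOrthonormalBasis ℂ E
  have hmoment (i j) : ∫ ψ, ‖⟪b i, ψ⟫_ℂ‖ ^ 2 * ‖⟪b j, ψ⟫_ℂ‖ ^ 2 ∂μ
      = (1 + if i = j then 1 else 0) * ((∫ ψ, ‖⟪u, ψ⟫_ℂ‖ ^ 4 ∂μ) / 2) := by
    have h := hμ.two_mul_integral_norm_inner_sq_mul_norm_inner_sq hu (b i) (b j)
    have hδ : ‖⟪b i, b j⟫_ℂ‖ ^ 2 = if i = j then 1 else 0 := by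
      rw [b.inner_eq_ite]; split_ifs <;> simp
    rw [b.norm_eq_one, b.norm_eq_one, hδ] at h
    linarith
  have htotal := hμ.sum_sum_integral_norm_inner_sq_mul_norm_inner_sq b
  simp only [hmoment, ← Finset.sum_mul, Finset.sum_add_distrib, Finset.sum_const,
    Finset.sum_ite_eq, Finset.mem_univ, if_true, Finset.card_univ, Fintype.card_fin,
    nsmul_eq_mul] at htotal
  linarith

theorem integral_norm_inner_sq_mul_norm_inner_sq (v w : E) :
    ∫ ψ, ‖⟪v, ψ⟫_ℂ‖ ^ 2 * ‖⟪w, ψ⟫_ℂ‖ ^ 2 ∂μ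
      = (‖v‖ ^ 2 * ‖w‖ ^ 2 + ‖⟪v, w⟫_ℂ‖ ^ 2) / (finrank ℂ E * (finrank ℂ E + 1)) := by
  have := hμ.isProbabilityMeasure
  obtain ⟨u, hu⟩ := hμ.ae_norm_eq_one.exists
  have hα := hμ.finrank_mul_add_one_mul_integral_norm_inner_pow_four hu
  have hN : (finrank ℂ E * (finrank ℂ E + 1) : ℝ) ≠ 0 := by
    have := hμ.finrank_pos
    positivity
  rw [eq_div_iff hN]
  linear_combination
    (finrank ℂ E * (finrank ℂ E + 1) : ℝ) / 2 *
      hμ.two_mul_integral_norm_inner_sq_mul_norm_inner_sq hu v w +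
    (‖v‖ ^ 2 * ‖w‖ ^ 2 + ‖⟪v, w⟫_ℂ‖ ^ 2) / 2 * hα

end IsUniformOnSphere

end UniformOnSphere

section Matrix

variable {𝕜 n : Type*}

open scoped MatrixOrder Matrix.Norms.L2Operator in
theorem span_range_vecMulVec_star [Finite n] :
    Submodule.span ℂ (Set.range fun v : n → ℂ => vecMulVec v (star v)) = ⊤ := by
  classical
  have := Fintype.ofFinite n
  rw [eq_top_iff, ← CStarAlgebra.span_nonneg, Submodule.span_le]
  intro A hA
  obtain ⟨m, v, rfl⟩ := posSemidef_iff_eq_sum_vecMulVec.mp (nonneg_iff_posSemidef.mp hA)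
  exact Submodule.sum_mem _ fun i _ => Submodule.subset_span ⟨v i, rfl⟩

@[elab_as_elim]
theorem vecMulVec_star_induction [Finite n] {p : Matrix n n ℂ → Prop}
    (rankOne : ∀ v : EuclideanSpace ℂ n, p (vecMulVec v (star (v : n → ℂ))))
    (add : ∀ A B, p A → p B → p (A + B)) (smul : ∀ (c : ℂ) A, p A → p (c • A))
    (A : Matrix n n ℂ) : p A := by
  have hA : A ∈ Submodule.span ℂ (Set.range fun v : n → ℂ => vecMulVec v (star v)) := by
    simp [span_range_vecMulVec_star]
  induction hA using Submodule.span_induction with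
  | mem _ h => obtain ⟨v, rfl⟩ := h; exact rankOne (.toLp 2 v)
  | zero => simpa using rankOne 0
  | add _ _ _ _ hA hB => exact add _ _ hA hB
  | smul c _ _ hA => exact smul c _ hA

variable [RCLike 𝕜] [Fintype n]

theorem trace_vecMulVec_star_self (v : EuclideanSpace 𝕜 n) :
    (vecMulVec v (star v : n → 𝕜)).trace = (‖v‖ ^ 2 : ℝ) := by
  rw [trace_vecMulVec, ← EuclideanSpace.inner_eq_star_dotProduct]
  simp [inner_self_eq_norm_sq_to_K]

theorem star_dotProduct_vecMulVec_mulVec (v ψ : EuclideanSpace 𝕜 n) :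
    star (ψ : n → 𝕜) ⬝ᵥ vecMulVec v (star v : n → 𝕜) *ᵥ ψ = (‖⟪v, ψ⟫_𝕜‖ ^ 2 : ℝ) := by
  rw [vecMulVec_mulVec, op_smul_eq_smul, dotProduct_smul, smul_eq_mul,
    dotProduct_comm (star _) ψ, dotProduct_comm (star _) v,
    ← EuclideanSpace.inner_eq_star_dotProduct, ← EuclideanSpace.inner_eq_star_dotProduct,
    ← inner_conj_symm ψ v, RCLike.mul_conj]
  simp

theorem trace_mul_vecMulVec {m R : Type*} [Fintype m] [NonUnitalCommSemiring R]
    (M : Matrix m n R) (x : n → R) (y : m → R) :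
    (M * vecMulVec x y).trace = y ⬝ᵥ M *ᵥ x := by
  rw [mul_vecMulVec, trace_vecMulVec, dotProduct_comm]

theorem trace_vecMulVec_star_mul_vecMulVec_star (v w : EuclideanSpace 𝕜 n) :
    (vecMulVec v (star v : n → 𝕜) * vecMulVec w (star w : n → 𝕜)).trace = (‖⟪v, w⟫_𝕜‖ ^ 2 : ℝ) := by
  rw [trace_mul_vecMulVec, star_dotProduct_vecMulVec_mulVec]

theorem trace_mul_le_of_posSemidef {A B : Matrix n n 𝕜} (hA : A.PosSemidef) (hB : B.PosSemidef) :
    (A * B).trace ≤ A.trace * B.trace := by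
  obtain ⟨l, v, rfl⟩ := posSemidef_iff_eq_sum_vecMulVec.mp hA
  obtain ⟨m, w, rfl⟩ := posSemidef_iff_eq_sum_vecMulVec.mp hB
  simp only [Finset.sum_mul_sum, trace_sum]
  refine Finset.sum_le_sum fun i _ => Finset.sum_le_sum fun j _ => ?_
  have hvw := trace_vecMulVec_star_mul_vecMulVec_star (.toLp 2 (v i)) (.toLp 2 (w j))
  have hv := trace_vecMulVec_star_self (.toLp 2 (v i))
  have hw := trace_vecMulVec_star_self (.toLp 2 (w j))
  rw [hvw, hv, hw, ← RCLike.ofReal_mul, RCLike.ofReal_le_ofReal, ← mul_pow]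
  gcongr
  exact norm_inner_le_norm _ _

theorem linearMap_trace_eq_sum_apply_single [DecidableEq n] {R : Type*} [CommSemiring R]
    (F : Matrix n n R →ₗ[R] Matrix n n R) :
    LinearMap.trace R _ F = ∑ i, ∑ j, F (single i j 1) i j := by
  rw [LinearMap.trace_eq_matrix_trace R (Matrix.stdBasis R n n), Matrix.trace,
    Fintype.sum_prod_type]
  refine Finset.sum_congr rfl fun i _ => Finset.sum_congr rfl fun j _ => ?_
  rw [diag_apply, LinearMap.toMatrix_apply, stdBasis_eq_single]
  simp [stdBasis]

theorem apply_eq_sum_trace_single_mul_smul [DecidableEq n] {R : Type*} [CommSemiring R]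
    (F : Matrix n n R →ₗ[R] Matrix n n R) (X : Matrix n n R) :
    F X = ∑ i, ∑ j, (single j i 1 * X).trace • F (single i j 1) := by
  conv_lhs => rw [matrix_eq_sum_single X]
  simp_rw [map_sum, trace_single_mul, one_smul, ← map_smul, smul_single, smul_eq_mul, mul_one]

end Matrix

namespace IsQCQ

variable {d : ℕ} {Φ : Matrix (Fin d) (Fin d) ℂ →ₗ[ℂ] Matrix (Fin d) (Fin d) ℂ}

theorem trace_apply (hΦ : IsQCQ Φ) (X : Matrix (Fin d) (Fin d) ℂ) : (Φ X).trace = X.trace := by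
  obtain ⟨m, ρ, M, hρ, -, hM, hΦ⟩ := hΦ
  simp only [hΦ, trace_sum, trace_smul, (hρ _).2, smul_eq_mul, mul_one]
  rw [← trace_sum, ← Finset.sum_mul, hM, one_mul]

theorem linearMap_trace_le (hΦ : IsQCQ Φ) : LinearMap.trace ℂ _ Φ ≤ d := by
  obtain ⟨m, ρ, M, hρ, hM, hM1, hΦ⟩ := hΦ
  have hΦ' : Φ =
      ∑ k, (traceLinearMap (Fin d) ℂ ℂ ∘ₗ LinearMap.mulLeft ℂ (M k)).smulRight (ρ k) := by
    ext1 X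
    simp [hΦ, LinearMap.sum_apply]
  calc LinearMap.trace ℂ _ Φ = ∑ k, (M k * ρ k).trace := by
        simp [hΦ', LinearMap.trace_smulRight]
    _ ≤ ∑ k, (M k).trace * (ρ k).trace :=
        Finset.sum_le_sum fun k _ => trace_mul_le_of_posSemidef (hM k) (hρ k).1
    _ = (∑ k, M k).trace := by simp [(hρ _).2]
    _ = d := by simp [hM1]

end IsQCQ

/-- The completely dephasing channel, which erases the off-diagonal entries. Over `ℂ` it measures in
the standard basis and re-prepares the observed basis state, and is an optimal QCQ channel. -/
def completelyDephasing (n R : Type*) [DecidableEq n] [CommSemiring R] :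
    Matrix n n R →ₗ[R] Matrix n n R :=
  diagonalLinearMap n R R ∘ₗ diagLinearMap n R R

theorem trace_completelyDephasing (n R : Type*) [Fintype n] [DecidableEq n] [CommSemiring R] :
    LinearMap.trace R _ (completelyDephasing n R) = Fintype.card n := by
  simp [linearMap_trace_eq_sum_apply_single, completelyDephasing, diagonal_apply, single_apply]

theorem isQCQ_completelyDephasing (d : ℕ) : IsQCQ (completelyDephasing (Fin d) ℂ) := by
  have hpos (k : Fin d) : (single k k (1 : ℂ)).PosSemidef := by
    rw [← diagonal_single]
    exact PosSemidef.diagonal (Pi.single_nonneg.mpr zero_le_one)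
  refine ⟨d, fun k => single k k 1, fun k => single k k 1,
    fun k => ⟨hpos k, trace_single_eq_same k 1⟩, hpos, sum_single_one, fun X => ?_⟩
  ext i j
  simp [completelyDephasing, trace_single_mul, Matrix.sum_apply, single_apply, diagonal_apply,
    ite_and]

section AverageFidelity

variable {n : Type*} [Fintype n] [MeasurableSpace (EuclideanSpace ℂ n)]

theorem isUniformOnSphere_of_map_unitaryGroup [DecidableEq n] [BorelSpace (EuclideanSpace ℂ n)]
    {μ : Measure (EuclideanSpace ℂ n)} [IsProbabilityMeasure μ] (hsphere : ∀ᵐ ψ ∂μ, ‖ψ‖ = 1)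
    (hinv : ∀ U ∈ unitaryGroup n ℂ, μ.map (toEuclideanCLM (n := n) (𝕜 := ℂ) U) = μ) :
    IsUniformOnSphere μ where
  isProbabilityMeasure := inferInstance
  ae_norm_eq_one := hsphere
  measurePreserving U := by
    let b := EuclideanSpace.basisFun n ℂ
    let M := U.toMatrix b.toBasis b.toBasis
    have hM : M ∈ unitaryGroup n ℂ := U.toMatrix_mem_unitaryGroup b b
    have hU : ⇑U = toEuclideanCLM (n := n) (𝕜 := ℂ) M := by
      have hlin : toEuclideanLin M = (U.toLinearEquiv : _ →ₗ[ℂ] _) := by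
        rw [toEuclideanLin_eq_toLin_orthonormal, toLin_toMatrix]
      ext1 ψ
      exact (LinearMap.congr_fun hlin ψ).symm
    exact ⟨U.continuous.measurable, by rw [hU, hinv M hM]⟩

/-- The average over pure states `ψ` of the fidelity between `|ψ⟩⟨ψ|` and its image under `F`. It
takes complex values, since `F` need not be positive. -/
noncomputable def averageFidelity (μ : Measure (EuclideanSpace ℂ n))
    (F : Matrix n n ℂ →ₗ[ℂ] Matrix n n ℂ) : ℂ :=
  ∫ ψ, star (ψ : n → ℂ) ⬝ᵥ F (vecMulVec ψ (star (ψ : n → ℂ))) *ᵥ ψ ∂μ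

namespace IsUniformOnSphere

variable [BorelSpace (EuclideanSpace ℂ n)] {μ : Measure (EuclideanSpace ℂ n)}
  (hμ : IsUniformOnSphere μ)
include hμ

theorem integrable_dotProduct_mulVec_mul (A B : Matrix n n ℂ) :
    Integrable (fun ψ : EuclideanSpace ℂ n =>
      (star (ψ : n → ℂ) ⬝ᵥ A *ᵥ ψ) * (star (ψ : n → ℂ) ⬝ᵥ B *ᵥ ψ)) μ :=
  hμ.integrable_of_continuous (by fun_prop)

theorem integral_dotProduct_mulVec_mul (A B : Matrix n n ℂ) :
    ∫ ψ : EuclideanSpace ℂ n, (star (ψ : n → ℂ) ⬝ᵥ A *ᵥ ψ) * (star (ψ : n → ℂ) ⬝ᵥ B *ᵥ ψ) ∂μ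
      = (A.trace * B.trace + (A * B).trace) / (Fintype.card n * (Fintype.card n + 1)) := by
  have hint := hμ.integrable_dotProduct_mulVec_mul
  induction A using vecMulVec_star_induction with
  | rankOne v =>
    induction B using vecMulVec_star_induction with
    | rankOne w =>
      simp only [star_dotProduct_vecMulVec_mulVec, trace_vecMulVec_star_self,
        trace_vecMulVec_star_mul_vecMulVec_star, ← RCLike.ofReal_mul]
      rw [integral_ofReal, hμ.integral_norm_inner_sq_mul_norm_inner_sq,
        finrank_euclideanSpace]
      push_cast
      rfl
    | add B C hB hC =>
      simp only [add_mulVec, dotProduct_add, mul_add, trace_add]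
      rw [integral_add (hint _ B) (hint _ C), hB, hC]
      ring
    | smul c B hB =>
      simp only [smul_mulVec, dotProduct_smul, smul_eq_mul, mul_left_comm _ c, Matrix.mul_smul,
        trace_smul, integral_const_mul, hB]
      ring
  | add A C hA hC =>
    simp only [add_mulVec, dotProduct_add, add_mul, trace_add]
    rw [integral_add (hint A B) (hint C B), hA, hC]
    ring
  | smul c A hA =>
    simp only [smul_mulVec, dotProduct_smul, smul_eq_mul, mul_assoc, smul_mul, trace_smul,
      integral_const_mul, hA]
    ring

theorem averageFidelity_eq [DecidableEq n] (F : Matrix n n ℂ →ₗ[ℂ] Matrix n n ℂ) :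
    averageFidelity μ F = ((F 1).trace + LinearMap.trace ℂ _ F)
      / (Fintype.card n * (Fintype.card n + 1)) := by
  have hfun (ψ : EuclideanSpace ℂ n) :
      star (ψ : n → ℂ) ⬝ᵥ F (vecMulVec ψ (star (ψ : n → ℂ))) *ᵥ ψ
        = ∑ i, ∑ j, (star (ψ : n → ℂ) ⬝ᵥ single j i 1 *ᵥ ψ)
            * (star (ψ : n → ℂ) ⬝ᵥ F (single i j 1) *ᵥ ψ) := by
    rw [apply_eq_sum_trace_single_mul_smul]
    simp only [trace_mul_vecMulVec, sum_mulVec, dotProduct_sum, smul_mulVec, dotProduct_smul,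
      smul_eq_mul]
  have hone : (F 1).trace = ∑ i, ∑ j, (single j i (1 : ℂ)).trace * (F (single i j 1)).trace := by
    rw [apply_eq_sum_trace_single_mul_smul F 1]
    simp only [mul_one, trace_sum, trace_smul, smul_eq_mul]
  have hint (i j : n) := hμ.integrable_dotProduct_mulVec_mul (single j i 1) (F (single i j 1))
  simp only [averageFidelity, hfun]
  rw [integral_finsetSum _ fun i _ => integrable_finsetSum _ fun j _ => hint i j]
  simp only [integral_finsetSum _ fun j _ => hint _ j, hμ.integral_dotProduct_mulVec_mul, hone,
    linearMap_trace_eq_sum_apply_single, trace_single_mul, one_smul, ← Finset.sum_div,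
    Finset.sum_add_distrib]

end IsUniformOnSphere

end AverageFidelity

section QCQFidelity

variable {d : ℕ} [MeasurableSpace (EuclideanSpace ℂ (Fin d))]
  [BorelSpace (EuclideanSpace ℂ (Fin d))] {μ : Measure (EuclideanSpace ℂ (Fin d))}
  {Φ : Matrix (Fin d) (Fin d) ℂ →ₗ[ℂ] Matrix (Fin d) (Fin d) ℂ}

theorem IsQCQ.averageFidelity_eq (hΦ : IsQCQ Φ) (hμ : IsUniformOnSphere μ) :
    averageFidelity μ Φ = (d + LinearMap.trace ℂ _ Φ) / (d * (d + 1)) := by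
  rw [hμ.averageFidelity_eq, hΦ.trace_apply, trace_one, Fintype.card_fin]

theorem IsQCQ.averageFidelity_le (hΦ : IsQCQ Φ) (hμ : IsUniformOnSphere μ) :
    averageFidelity μ Φ ≤ (2 / (d + 1) : ℝ) := by
  have hd : (d : ℂ) ≠ 0 := by simpa using hμ.finrank_pos.ne'
  have hden : (0 : ℂ) ≤ ((d * (d + 1) : ℕ) : ℂ)⁻¹ := inv_nonneg.mpr (Nat.cast_nonneg _)
  push_cast at hden
  calc averageFidelity μ Φ = (d + LinearMap.trace ℂ _ Φ) * ((d : ℂ) * (d + 1))⁻¹ := by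
        rw [hΦ.averageFidelity_eq hμ, div_eq_mul_inv]
    _ ≤ (d + d) * ((d : ℂ) * (d + 1))⁻¹ :=
        mul_le_mul_of_nonneg_right (add_le_add_right hΦ.linearMap_trace_le _) hden
    _ = (2 / (d + 1) : ℝ) := by push_cast; field_simp; ring

theorem averageFidelity_completelyDephasing (hμ : IsUniformOnSphere μ) :
    averageFidelity μ (completelyDephasing (Fin d) ℂ) = 2 / (d + 1) := by
  have hd : (d : ℂ) ≠ 0 := by simpa using hμ.finrank_pos.ne'
  rw [(isQCQ_completelyDephasing d).averageFidelity_eq hμ, trace_completelyDephasing,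
    Fintype.card_fin]
  field_simp
  ring

end QCQFidelity

/-- for any QCQ channel on `ℂ^d` the average fidelity over pure
    states (w.r.t. the normalized unitarily invariant measure on the unit
    sphere) is at most `2/(d+1)`, and the bound is attained by some QCQ channel. -/
theorem stmt5 (d : ℕ) (hd : 1 ≤ d)
    [MeasurableSpace (EuclideanSpace ℂ (Fin d))] [BorelSpace (EuclideanSpace ℂ (Fin d))]
    (μ : Measure (EuclideanSpace ℂ (Fin d))) [IsProbabilityMeasure μ]
    (hsphere : μ {ψ : EuclideanSpace ℂ (Fin d) | ‖ψ‖ = 1}ᶜ = 0)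
    (hinv : ∀ U ∈ Matrix.unitaryGroup (Fin d) ℂ,
      μ.map (fun ψ : EuclideanSpace ℂ (Fin d) =>
        ((WithLp.equiv 2 (Fin d → ℂ)).symm
          (U.mulVec ((WithLp.equiv 2 (Fin d → ℂ)) ψ)))) = μ) :
    (∀ F : Matrix (Fin d) (Fin d) ℂ →ₗ[ℂ] Matrix (Fin d) (Fin d) ℂ, IsQCQ F →
      (∫ ψ : EuclideanSpace ℂ (Fin d),
          (star (ψ : Fin d → ℂ)) ⬝ᵥ
            (F (Matrix.vecMulVec (ψ : Fin d → ℂ) (star (ψ : Fin d → ℂ)))).mulVec ψ ∂μ).re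
        ≤ 2 / ((d : ℝ) + 1)) ∧
    (∃ F : Matrix (Fin d) (Fin d) ℂ →ₗ[ℂ] Matrix (Fin d) (Fin d) ℂ, IsQCQ F ∧
      (∫ ψ : EuclideanSpace ℂ (Fin d),
          (star (ψ : Fin d → ℂ)) ⬝ᵥ
            (F (Matrix.vecMulVec (ψ : Fin d → ℂ) (star (ψ : Fin d → ℂ)))).mulVec ψ ∂μ)
        = 2 / ((d : ℂ) + 1)) := by
  have hμ : IsUniformOnSphere μ := isUniformOnSphere_of_map_unitaryGroup hsphere hinv
  exact ⟨fun F hF => (Complex.le_def.mp (hF.averageFidelity_le hμ)).1,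
    completelyDephasing (Fin d) ℂ, isQCQ_completelyDephasing d,
    averageFidelity_completelyDephasing hμ⟩
end

section
/- For the depolarizing channel N(ρ) = (1−ε)ρ + ε (Tr ρ) I/d on a d-dimensional Hilbert space, the image of the maximally entangled state |Ψ⟩ = (1/√d) Σ_i |ii⟩ under id ⊗ N equals (1−ε)|Ψ⟩⟨Ψ| + ε I/d², and this state is separable if and only if ε ≥ d/(d+1). -/
open Matrix ComplexOrder Kronecker

/-- `id_n ⊗ Φ` acting on matrices over `Fin n × Fin d`. -/
noncomputable def applyBlocks {d : ℕ} (n : ℕ)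
    (Φ : Matrix (Fin d) (Fin d) ℂ →ₗ[ℂ] Matrix (Fin d) (Fin d) ℂ)
    (M : Matrix (Fin n × Fin d) (Fin n × Fin d) ℂ) :
    Matrix (Fin n × Fin d) (Fin n × Fin d) ℂ :=
  Matrix.of fun p q => Φ (Matrix.of fun i j => M (p.1, i) (q.1, j)) p.2 q.2

/-- The depolarizing channel `N(ρ) = (1−ε)ρ + (ε/d)(Tr ρ) I`. -/
noncomputable def depol (d : ℕ) (ε : ℝ) :
    Matrix (Fin d) (Fin d) ℂ →ₗ[ℂ] Matrix (Fin d) (Fin d) ℂ :=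
  ((1 - ε : ℝ) : ℂ) • LinearMap.id +
    ((ε : ℂ) / d) • (Matrix.traceLinearMap (Fin d) ℂ ℂ).smulRight 1

/-- The maximally entangled unit vector `|Ψ⟩ = (1/√d) Σ_i |ii⟩`. -/
noncomputable def maxEnt (d : ℕ) : Fin d × Fin d → ℂ :=
  fun p => if p.1 = p.2 then ((1 / Real.sqrt d : ℝ) : ℂ) else 0

/-- Separability of a bipartite state: membership in the convex hull of
    product states. -/
def IsSepState {d : ℕ} (M : Matrix (Fin d × Fin d) (Fin d × Fin d) ℂ) : Prop :=
  ∃ (m : ℕ) (c : Fin m → ℝ) (A B : Fin m → Matrix (Fin d) (Fin d) ℂ),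
    (∀ i, 0 ≤ c i) ∧ (∑ i, c i = 1) ∧
    (∀ i, (A i).PosSemidef ∧ (A i).trace = 1) ∧
    (∀ i, (B i).PosSemidef ∧ (B i).trace = 1) ∧
    M = ∑ i, ((c i : ℂ)) • ((A i) ⊗ₖ (B i))

/-!
The depolarizing channel gives `id ⊗ N = (1 - ε) id + (ε / d) Tr₂(·) ⊗ I`, and `Tr₂ |Ψ⟩⟨Ψ| = I / d`.

Separable states have a positive semidefinite partial transpose (Peres). Evaluating the partial
transpose of the isotropic state on the antisymmetric vector `|01⟩ - |10⟩` gives `(1 - ε) d ≤ ε`.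

Conversely, separable states form a convex set containing `I / d²`, the value at `ε = 1`, so only
the critical value `ε = d / (d + 1)` is left. For random phases `z`, the fourth moments
`E[zᵢ z̄ⱼ z̄ₖ zₗ]` show that averaging the product of the pure state of `z / √d` with its transpose
gives `(d |Ψ⟩⟨Ψ| + I - ∑ᵢ |ii⟩⟨ii|) / d²`; mixing in the classically correlated state restores the
missing diagonal.
-/

section DensityMatrix

variable {n : Type*} [Fintype n]

/-- Density matrices, i.e. quantum states: positive semidefinite matrices of trace one. This is the
condition `IsSepState` imposes on each tensor factor. -/
def IsDensityMatrix (A : Matrix n n ℂ) : Prop := A.PosSemidef ∧ A.trace = 1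

theorem IsDensityMatrix.transpose {A : Matrix n n ℂ} (hA : IsDensityMatrix A) :
    IsDensityMatrix Aᵀ :=
  ⟨hA.1.transpose, A.trace_transpose.trans hA.2⟩

theorem isDensityMatrix_single [DecidableEq n] (i : n) : IsDensityMatrix (single i i (1 : ℂ)) := by
  refine ⟨?_, trace_single_eq_same i 1⟩
  rw [← diagonal_single]
  exact .diagonal (Pi.single_nonneg.2 zero_le_one)

theorem isDensityMatrix_inv_card_smul_one [DecidableEq n] [Nonempty n] :
    IsDensityMatrix ((Fintype.card n : ℂ)⁻¹ • (1 : Matrix n n ℂ)) :=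
  ⟨PosSemidef.one.smul (by simp), by simp⟩

/-- The states `A ⊗ B` of a bipartite system, whose convex hull consists of the separable states. -/
def productStates (m n : Type*) [Fintype m] [Fintype n] : Set (Matrix (m × n) (m × n) ℂ) :=
  {M | ∃ A B, IsDensityMatrix A ∧ IsDensityMatrix B ∧ A ⊗ₖ B = M}

end DensityMatrix

section Separable

variable {d : ℕ}

theorem isSepState_iff_mem_convexHull {M : Matrix (Fin d × Fin d) (Fin d × Fin d) ℂ} :
    IsSepState M ↔ M ∈ convexHull ℝ (productStates (Fin d) (Fin d)) := by
  constructor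
  · rintro ⟨m, c, A, B, hc, hsum, hA, hB, rfl⟩
    exact mem_convexHull_of_exists_fintype c (fun i => A i ⊗ₖ B i) hc hsum
      (fun i => ⟨A i, B i, hA i, hB i, rfl⟩) (by simp only [Complex.coe_smul])
  · rw [mem_convexHull_iff_exists_fintype]
    rintro ⟨ι, _, c, ρ, hc, hsum, hρ, rfl⟩
    choose A B hA hB hAB using hρ
    let e := (Fintype.equivFin ι).symm
    refine ⟨Fintype.card ι, c ∘ e, A ∘ e, B ∘ e, fun i => hc (e i), (e.sum_comp c).trans hsum,
      fun i => hA (e i), fun i => hB (e i), ?_⟩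
    simp only [Function.comp_apply, hAB, Complex.coe_smul]
    exact (e.sum_comp fun i => c i • ρ i).symm

theorem convex_setOf_isSepState :
    Convex ℝ {M : Matrix (Fin d × Fin d) (Fin d × Fin d) ℂ | IsSepState M} := by
  simpa only [isSepState_iff_mem_convexHull] using! convex_convexHull ℝ (productStates _ _)

theorem IsDensityMatrix.isSepState_kronecker {A B : Matrix (Fin d) (Fin d) ℂ}
    (hA : IsDensityMatrix A) (hB : IsDensityMatrix B) : IsSepState (A ⊗ₖ B) :=
  isSepState_iff_mem_convexHull.2 (subset_convexHull ℝ _ ⟨A, B, hA, hB, rfl⟩)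

theorem IsSepState.inv_card_smul_sum {ι : Type*} [Fintype ι] [Nonempty ι]
    {ρ : ι → Matrix (Fin d × Fin d) (Fin d × Fin d) ℂ} (hρ : ∀ i, IsSepState (ρ i)) :
    IsSepState ((Fintype.card ι : ℝ)⁻¹ • ∑ i, ρ i) := by
  rw [Finset.smul_sum]
  exact convex_setOf_isSepState.sum_mem (fun _ _ => by positivity) (by simp) fun i _ => hρ i

end Separable

section PartialTranspose

variable {m n R : Type*} [CommSemiring R]

/-- The partial transpose `id ⊗ T` of a bipartite matrix, used as a test for separability. -/
def partialTranspose : Matrix (m × n) (m × n) R →ₗ[R] Matrix (m × n) (m × n) R where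
  toFun M := of fun p q => M (p.1, q.2) (q.1, p.2)
  map_add' _ _ := rfl
  map_smul' _ _ := rfl

theorem partialTranspose_apply (M : Matrix (m × n) (m × n) R) (p q : m × n) :
    partialTranspose M p q = M (p.1, q.2) (q.1, p.2) := rfl

theorem partialTranspose_kronecker (A : Matrix m m R) (B : Matrix n n R) :
    partialTranspose (A ⊗ₖ B) = A ⊗ₖ Bᵀ := rfl

theorem IsSepState.posSemidef_partialTranspose {d : ℕ}
    {M : Matrix (Fin d × Fin d) (Fin d × Fin d) ℂ} (hM : IsSepState M) :
    (partialTranspose M).PosSemidef := by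
  obtain ⟨k, c, A, B, hc, -, hA, hB, rfl⟩ := hM
  simp only [map_sum, map_smul, partialTranspose_kronecker]
  exact posSemidef_sum _ fun i _ =>
    ((hA i).1.kronecker (hB i).1.transpose).smul (Complex.zero_le_real.2 (hc i))

end PartialTranspose

theorem apply_add_apply_le_of_posSemidef {n R : Type*} [Ring R] [PartialOrder R]
    [IsOrderedAddMonoid R] [StarRing R] {M : Matrix n n R} (hM : M.PosSemidef) (a b : n) :
    M a b + M b a ≤ M a a + M b b := by
  have h : 0 ≤ M a a + -M a b + (M b b + -M b a) := by
    simpa [dotProduct, mulVec, Fin.sum_univ_two] using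
      (hM.submatrix ![a, b]).dotProduct_mulVec_nonneg ![1, -1]
  rw [← sub_nonneg]
  convert h using 1
  abel

section Isotropic

variable {d : ℕ}

theorem vecMulVec_maxEnt_apply (p q : Fin d × Fin d) :
    vecMulVec (maxEnt d) (star (maxEnt d)) p q
      = if p.1 = p.2 ∧ q.1 = q.2 then (d : ℂ)⁻¹ else 0 := by
  have h : ((√d : ℝ) : ℂ) * ((√d : ℝ) : ℂ) = d := by
    rw [← Complex.ofReal_mul, Real.mul_self_sqrt (Nat.cast_nonneg d), Complex.ofReal_natCast]
  by_cases h₁ : p.1 = p.2 <;> by_cases h₂ : q.1 = q.2 <;>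
    simp [vecMulVec_apply, maxEnt, h₁, h₂, ← mul_inv, h]

/-- The isotropic state with noise `ε`, the mixture of the maximally entangled state `|Ψ⟩⟨Ψ|` and
the maximally mixed state `I/d²`. -/
noncomputable def isotropicState (d : ℕ) (ε : ℝ) : Matrix (Fin d × Fin d) (Fin d × Fin d) ℂ :=
  ((1 - ε : ℝ) : ℂ) • vecMulVec (maxEnt d) (star (maxEnt d)) + ((ε : ℂ) / (d ^ 2 : ℂ)) • 1

theorem isotropicState_apply (ε : ℝ) (i k j l : Fin d) :
    isotropicState d ε (i, k) (j, l)
      = (1 - ε) * (if i = k ∧ j = l then (d : ℂ)⁻¹ else 0)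
        + ε / d ^ 2 * (if i = j ∧ k = l then 1 else 0) := by
  simp [isotropicState, vecMulVec_maxEnt_apply, Matrix.one_apply]

theorem isotropicState_eq_lineMap (ε : ℝ) :
    isotropicState d ε = AffineMap.lineMap (vecMulVec (maxEnt d) (star (maxEnt d)))
      (((d : ℂ) ^ 2)⁻¹ • (1 : Matrix (Fin d × Fin d) (Fin d × Fin d) ℂ)) ε := by
  rw [AffineMap.lineMap_apply_module, isotropicState, div_eq_mul_inv, mul_smul, Complex.coe_smul,
    Complex.coe_smul]

theorem convex_setOf_isSepState_isotropicState :
    Convex ℝ {ε | IsSepState (isotropicState d ε)} := by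
  simp only [isotropicState_eq_lineMap]
  exact convex_setOf_isSepState.affine_preimage (AffineMap.lineMap _ _)

theorem isSepState_isotropicState_one [NeZero d] : IsSepState (isotropicState d 1) := by
  have h := isDensityMatrix_inv_card_smul_one (n := Fin d)
  convert h.isSepState_kronecker h using 1
  simp [isotropicState, smul_kronecker, kronecker_smul, smul_smul, sq]

theorem div_add_one_le_of_isSepState_isotropicState (hd : 2 ≤ d) {ε : ℝ}
    (h : IsSepState (isotropicState d ε)) : (d : ℝ) / (d + 1) ≤ ε := by
  have hd₀ : (0 : ℝ) < d := by positivity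
  let a : Fin d := ⟨0, by lia⟩
  let b : Fin d := ⟨1, by lia⟩
  have hab : a ≠ b := by simp [a, b]
  have hle := apply_add_apply_le_of_posSemidef h.posSemidef_partialTranspose (a, b) (b, a)
  simp only [partialTranspose_apply, isotropicState_apply, hab, hab.symm, and_self, if_true,
    if_false, mul_zero, mul_one, zero_add, add_zero] at hle
  have hle_real : (1 - ε) * (d : ℝ)⁻¹ + (1 - ε) * (d : ℝ)⁻¹ ≤ ε / d ^ 2 + ε / d ^ 2 := by
    rw [← Complex.real_le_real]
    push_cast
    exact hle
  have hoverlap : (1 - ε) * d ≤ ε := by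
    field_simp at hle_real
    linarith
  rw [div_le_iff₀ (by positivity)]
  linarith

end Isotropic

section Channel

/-- The partial trace over the second factor of a bipartite matrix, which is what the depolarizing
channel retains of its input. -/
def partialTrace {m n R : Type*} [Fintype n] [AddCommMonoid R] (M : Matrix (m × n) (m × n) R) :
    Matrix m m R :=
  of fun i j => ∑ k, M (i, k) (j, k)

variable {d : ℕ}

theorem applyBlocks_depol {n : ℕ} (ε : ℝ) (M : Matrix (Fin n × Fin d) (Fin n × Fin d) ℂ) :
    applyBlocks n (depol d ε) M
      = ((1 - ε : ℝ) : ℂ) • M + ((ε : ℂ) / d) • (partialTrace M ⊗ₖ 1) := by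
  ext p q
  simp [applyBlocks, depol, partialTrace, Matrix.trace, kroneckerMap_apply]

theorem partialTrace_maxEnt :
    partialTrace (vecMulVec (maxEnt d) (star (maxEnt d))) = (d : ℂ)⁻¹ • 1 := by
  ext i j
  simp only [partialTrace, of_apply, vecMulVec_maxEnt_apply]
  obtain rfl | hij := eq_or_ne i j
  · simp
  · rw [Matrix.smul_apply, one_apply_ne hij, smul_zero]
    exact Finset.sum_eq_zero fun k _ => if_neg fun h => hij (h.1.trans h.2.symm)

theorem applyBlocks_depol_maxEnt (d : ℕ) (ε : ℝ) :
    applyBlocks d (depol d ε) (vecMulVec (maxEnt d) (star (maxEnt d))) = isotropicState d ε := by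
  rw [applyBlocks_depol, partialTrace_maxEnt, smul_kronecker, one_kronecker_one, smul_smul,
    ← div_eq_mul_inv, div_div, ← sq, isotropicState]

end Channel

section Phases

theorem sum_addChar_comp_eq_ite {A B R : Type*} [AddGroup A] [Fintype A] [AddGroup B]
    [CommRing R] [IsDomain R] {ψ : AddChar B R} (hψ : Function.Injective ψ) (f : A →+ B)
    [Decidable (f = 0)] : ∑ a, ψ (f a) = if f = 0 then (Fintype.card A : R) else 0 := by
  classical
  have htrivial : ψ.compAddMonoidHom f = 0 ↔ f = 0 := by
    simp only [DFunLike.ext_iff, AddChar.compAddMonoidHom_apply, AddChar.zero_apply,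
      AddMonoidHom.zero_apply, ← ψ.map_zero_eq_one, hψ.eq_iff]
  simpa only [AddChar.compAddMonoidHom_apply, htrivial] using (ψ.compAddMonoidHom f).sum_eq_ite

theorem evalAddMonoidHom_injective {ι G : Type*} [AddZeroClass G] [Nontrivial G] :
    Function.Injective (Pi.evalAddMonoidHom fun _ : ι => G) := by
  classical
  intro i j h
  obtain ⟨g, hg⟩ := exists_ne (0 : G)
  by_contra hij
  exact hg (by simpa [Ne.symm hij] using DFunLike.congr_fun h (Pi.single i g))

theorem evalAddMonoidHom_add_eq_add_iff {ι G : Type*} [AddCommGroup G]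
    (hG : ∃ g : G, g + g ≠ 0) {i j k l : ι} :
    Pi.evalAddMonoidHom (fun _ => G) i + Pi.evalAddMonoidHom (fun _ => G) l
        = Pi.evalAddMonoidHom (fun _ => G) j + Pi.evalAddMonoidHom (fun _ => G) k
      ↔ (i = j ∧ k = l) ∨ (i = k ∧ j = l) := by
  classical
  obtain ⟨g, hg⟩ := hG
  have hg₀ : g ≠ 0 := fun h => hg (by rw [h, add_zero])
  have : Nontrivial G := ⟨g, 0, hg₀⟩
  refine ⟨fun h => ?_, ?_⟩
  · obtain rfl | rfl : i = j ∨ i = k := by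
      by_contra! hne
      have h_single := DFunLike.congr_fun h (Pi.single i g)
      by_cases hil : l = i <;> simp [hil, hne.1.symm, hne.2.symm, hg, hg₀] at h_single
    · exact .inl ⟨rfl, (evalAddMonoidHom_injective (add_left_cancel h)).symm⟩
    · rw [add_comm (Pi.evalAddMonoidHom _ j)] at h
      exact .inr ⟨rfl, (evalAddMonoidHom_injective (add_left_cancel h)).symm⟩
  · rintro (⟨rfl, rfl⟩ | ⟨rfl, rfl⟩)
    · rfl
    · exact add_comm _ _

variable {ι : Type*} [Fintype ι]

/-- The pure state of the unit vector proportional to `∑ᵢ ω ^ zᵢ |i⟩`, where `ω` is a primitive cube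
root of unity. Averages over `z` replace averages over arbitrary phases; cube roots suffice because
the fourth moments only require `2 ≠ 0` in the exponents. -/
noncomputable def phaseState (z : ι → ZMod 3) : Matrix ι ι ℂ :=
  (Fintype.card ι : ℂ)⁻¹ • vecMulVec (fun i => ZMod.stdAddChar (z i))
    (star fun i => ZMod.stdAddChar (z i))

theorem phaseState_apply (z : ι → ZMod 3) (i j : ι) :
    phaseState z i j = (Fintype.card ι : ℂ)⁻¹ * ZMod.stdAddChar (z i - z j) := by
  simp [phaseState, vecMulVec_apply, sub_eq_add_neg, AddChar.map_add_eq_mul,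
    AddChar.map_neg_eq_conj]

theorem isDensityMatrix_phaseState [Nonempty ι] (z : ι → ZMod 3) :
    IsDensityMatrix (phaseState z) :=
  ⟨(posSemidef_vecMulVec_self_star _).smul (by simp), by
    simp [Matrix.trace, phaseState_apply]⟩

theorem sum_phase_fourth_moment [DecidableEq ι] (i j k l : ι) :
    ∑ z : ι → ZMod 3, ZMod.stdAddChar (z i + z l - (z j + z k))
      = if (i = j ∧ k = l) ∨ (i = k ∧ j = l) then (Fintype.card (ι → ZMod 3) : ℂ) else 0 := by
  classical
  let e : ι → (ι → ZMod 3) →+ ZMod 3 := Pi.evalAddMonoidHom fun _ => ZMod 3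
  have h : e i + e l - (e j + e k) = 0 ↔ (i = j ∧ k = l) ∨ (i = k ∧ j = l) := by
    rw [sub_eq_zero]
    exact evalAddMonoidHom_add_eq_add_iff ⟨1, by decide⟩
  simpa only [h] using! sum_addChar_comp_eq_ite ZMod.injective_stdAddChar (e i + e l - (e j + e k))

/-- The average over all phases of the product states `phaseState z ⊗ (phaseState z)ᵀ`, separable by
construction. -/
noncomputable def averagePhaseState (ι : Type*) [Fintype ι] [DecidableEq ι] :
    Matrix (ι × ι) (ι × ι) ℂ :=
  (Fintype.card (ι → ZMod 3) : ℝ)⁻¹ • ∑ z : ι → ZMod 3, phaseState z ⊗ₖ (phaseState z)ᵀ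

theorem averagePhaseState_apply [DecidableEq ι] (i k j l : ι) :
    averagePhaseState ι (i, k) (j, l)
      = if (i = j ∧ k = l) ∨ (i = k ∧ j = l) then ((Fintype.card ι : ℂ) ^ 2)⁻¹ else 0 := by
  have hterm (z : ι → ZMod 3) : (phaseState z ⊗ₖ (phaseState z)ᵀ) (i, k) (j, l)
      = ((Fintype.card ι : ℂ) ^ 2)⁻¹ * ZMod.stdAddChar (z i + z l - (z j + z k)) := by
    rw [show z i + z l - (z j + z k) = (z i - z j) + (z l - z k) by abel,
      AddChar.map_add_eq_mul, kroneckerMap_apply, transpose_apply, phaseState_apply,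
      phaseState_apply]
    ring
  rw [averagePhaseState, Matrix.smul_apply, Matrix.sum_apply,
    Finset.sum_congr rfl fun z _ => hterm z, ← Finset.mul_sum, sum_phase_fourth_moment]
  split_ifs
  · rw [Complex.real_smul, Complex.ofReal_inv, Complex.ofReal_natCast, mul_left_comm,
      inv_mul_cancel₀ (Nat.cast_ne_zero.2 Fintype.card_ne_zero), mul_one]
  · rw [mul_zero, smul_zero]

/-- The classically correlated state `(1/d) ∑ᵢ |ii⟩⟨ii|`. -/
noncomputable def correlatedState (ι : Type*) [Fintype ι] [DecidableEq ι] :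
    Matrix (ι × ι) (ι × ι) ℂ :=
  (Fintype.card ι : ℝ)⁻¹ • ∑ i : ι, single i i (1 : ℂ) ⊗ₖ single i i (1 : ℂ)

theorem correlatedState_apply [DecidableEq ι] (i k j l : ι) :
    correlatedState ι (i, k) (j, l)
      = if (i = j ∧ k = l) ∧ i = k ∧ j = l then (Fintype.card ι : ℂ)⁻¹ else 0 := by
  simp only [correlatedState, single_kronecker_single, Matrix.smul_apply, Matrix.sum_apply,
    single_apply, Prod.mk.injEq, mul_one]
  split_ifs with h
  · obtain ⟨⟨rfl, rfl⟩, rfl, -⟩ := h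
    simp
  · rw [Finset.sum_eq_zero fun c _ => if_neg ?_, smul_zero]
    rintro ⟨⟨rfl, rfl⟩, rfl, rfl⟩
    exact h ⟨⟨rfl, rfl⟩, rfl, rfl⟩

end Phases

section CriticalState

variable {d : ℕ}

theorem isSepState_averagePhaseState [NeZero d] : IsSepState (averagePhaseState (Fin d)) :=
  .inv_card_smul_sum fun z =>
    (isDensityMatrix_phaseState z).isSepState_kronecker (isDensityMatrix_phaseState z).transpose

theorem isSepState_correlatedState [NeZero d] : IsSepState (correlatedState (Fin d)) :=
  .inv_card_smul_sum fun i => (isDensityMatrix_single i).isSepState_kronecker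
    (isDensityMatrix_single i)

theorem isotropicState_critical [NeZero d] :
    isotropicState d (d / (d + 1))
      = ((d : ℝ) / (d + 1)) • averagePhaseState (Fin d)
        + (1 / ((d : ℝ) + 1)) • correlatedState (Fin d) := by
  have hd : (d : ℂ) ≠ 0 := NeZero.ne _
  have hd' : (d : ℂ) + 1 ≠ 0 := by exact_mod_cast d.succ_ne_zero
  ext ⟨i, k⟩ ⟨j, l⟩
  simp only [isotropicState_apply, Matrix.add_apply, Matrix.smul_apply, averagePhaseState_apply,
    correlatedState_apply, Fintype.card_fin, Complex.real_smul]
  push_cast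
  split_ifs <;> first | tauto | (field_simp; ring)

theorem isSepState_isotropicState_critical [NeZero d] :
    IsSepState (isotropicState d (d / (d + 1))) := by
  rw [isotropicState_critical]
  exact convex_setOf_isSepState isSepState_averagePhaseState isSepState_correlatedState
    (by positivity) (by positivity) (by field_simp)

theorem isSepState_isotropicState_iff (hd : 2 ≤ d) {ε : ℝ} (hε : ε ≤ 1) :
    IsSepState (isotropicState d ε) ↔ (d : ℝ) / (d + 1) ≤ ε := by
  have : NeZero d := ⟨by lia⟩
  exact ⟨div_add_one_le_of_isSepState_isotropicState hd, fun h =>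
    convex_setOf_isSepState_isotropicState.ordConnected.out isSepState_isotropicState_critical
      isSepState_isotropicState_one ⟨h, hε⟩⟩

end CriticalState

/-- the image of the maximally entangled state under
    `id ⊗ N` for the depolarizing channel `N` is the isotropic state
    `(1−ε)|Ψ⟩⟨Ψ| + ε I/d²`, and this state is separable iff `ε ≥ d/(d+1)`. -/
theorem stmt6 (d : ℕ) (hd : 2 ≤ d) (ε : ℝ) (hε0 : 0 ≤ ε) (hε1 : ε ≤ 1) :
    applyBlocks d (depol d ε)
        (Matrix.vecMulVec (maxEnt d) (star (maxEnt d)))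
      = ((1 - ε : ℝ) : ℂ) • Matrix.vecMulVec (maxEnt d) (star (maxEnt d)) +
          ((ε : ℂ) / (d ^ 2 : ℂ)) • 1 ∧
    (IsSepState
        (((1 - ε : ℝ) : ℂ) • Matrix.vecMulVec (maxEnt d) (star (maxEnt d)) +
          ((ε : ℂ) / (d ^ 2 : ℂ)) • 1)
      ↔ (d : ℝ) / (d + 1) ≤ ε) := by
  exact ⟨applyBlocks_depol_maxEnt d ε, isSepState_isotropicState_iff hd hε1⟩
end
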